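/- Let d ≥ 3 be an integer, q a prime power, F a finite field with q elements, Γ any group, I = {i₀ < i₁ < i₂} ⊆ {1,…,d−1}, and let s be a (possibly empty) chain of F-linear subspaces of F^d whose dimensions are pairwise distinct and lie in {1,…,d−1}∖I. Assume: (1) 2·i₀ ≤ i₁, or some V ∈ s has i₀ < dim(V) < i₁; and (2) 2·i₁ − i₀ ≤ i₂, or some V ∈ s has i₀ < dim(V) < i₁ and 2·i₁ − dim(V) ≤ i₂, or some W ∈ s has i₁ < dim(W) < i₂. Let L be the two-dimensional simplicial complex whose vertices are the subspaces U of F^d with dim(U) ∈ I and s ∪ {U} a chain, and whose faces are the sets t of such subspaces with s ∪ t a chain; its maximal faces are the triangles {U₀,U₁,U₂} with dim(U_j) = i_j. Let π₂ be the uniform distribution on these triangles and let π₁ sample a triangle from π₂ and then a uniformly random 2-element subset of it. Then for every Γ-valued 1-cochain f on L there exists g from the vertices of L to Γ such that (1/13)·Pr_{{u,v}∼π₁}[f(u,v) ≠ g(u)·g(v)⁻¹] ≤ Pr_{{u,v,w}∼π₂}[δf(u,v,w) ≠ 1]. -/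

import Mathlib

open Finset
open scoped Classical

noncomputable instance (F : Type) [Field F] [Fintype F] (n : ℕ) :
    Fintype (Submodule F (Fin n → F)) :=
  Fintype.ofInjective (fun W => (W : Set (Fin n → F)))
    fun _ _ h => SetLike.coe_injective h

/-- The triangles of the projection `L` of the link of `s` to the three dimensions
`i₀ < i₁ < i₂`, listed as triples ordered by dimension: triples `(U₀,U₁,U₂)` of subspaces
of dimensions `i₀, i₁, i₂` such that `s ∪ {U₀,U₁,U₂}` is a chain. -/
noncomputable def linkTriangles (F : Type) [Field F] [Fintype F] (n i₀ i₁ i₂ : ℕ)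
    (s : Finset (Submodule F (Fin n → F))) :
    Finset (Submodule F (Fin n → F) × Submodule F (Fin n → F) × Submodule F (Fin n → F)) :=
  Finset.univ.filter fun p =>
    Module.finrank F p.1 = i₀ ∧ Module.finrank F p.2.1 = i₁ ∧
      Module.finrank F p.2.2 = i₂ ∧
      IsChain (· ≤ ·)
        ((insert p.1 (insert p.2.1 (insert p.2.2 s)) : Finset (Submodule F (Fin n → F))) :
          Set (Submodule F (Fin n → F)))

/-- `Pr_{{u,v,w} ∼ π₂}[δf(u,v,w) ≠ 1]`, where `π₂` is the uniform distribution on the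
triangles of `L`. -/
noncomputable def triWt (F : Type) [Field F] [Fintype F] (n i₀ i₁ i₂ : ℕ)
    (s : Finset (Submodule F (Fin n → F))) (Γ : Type) [Group Γ]
    (f : Submodule F (Fin n → F) → Submodule F (Fin n → F) → Γ) : ℝ :=
  (∑ p ∈ linkTriangles F n i₀ i₁ i₂ s,
      if f p.1 p.2.1 * f p.2.1 p.2.2 * f p.2.2 p.1 = 1 then (0 : ℝ) else 1) /
    ((linkTriangles F n i₀ i₁ i₂ s).card : ℝ)

/-- `Pr_{{u,v} ∼ π₁}[f(u,v) ≠ g(u)·g(v)⁻¹]`, where `π₁` samples a uniform triangle of `L`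
and then a uniformly random 2-element subset of it. -/
noncomputable def triDist (F : Type) [Field F] [Fintype F] (n i₀ i₁ i₂ : ℕ)
    (s : Finset (Submodule F (Fin n → F))) (Γ : Type) [Group Γ]
    (f : Submodule F (Fin n → F) → Submodule F (Fin n → F) → Γ)
    (g : Submodule F (Fin n → F) → Γ) : ℝ :=
  (∑ p ∈ linkTriangles F n i₀ i₁ i₂ s,
      ((if f p.1 p.2.1 = g p.1 * (g p.2.1)⁻¹ then (0 : ℝ) else 1) +
        (if f p.1 p.2.2 = g p.1 * (g p.2.2)⁻¹ then (0 : ℝ) else 1) +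
        (if f p.2.1 p.2.2 = g p.2.1 * (g p.2.2)⁻¹ then (0 : ℝ) else 1)) / 3) /
    ((linkTriangles F n i₀ i₁ i₂ s).card : ℝ)

/-!
Choose a flag through `s`. Adding its members to a subspace until the dimension reaches `i₁` or
`i₂` contracts every edge of the link, through at most twelve triangles, to the `i₀`-dimensional
member of the flag; the two numerical conditions make the required sums of subspaces small enough.
Propagating `f` along the paths of this cone gives vertex labels for which every edge that
disagrees with `f` has a triangle with nontrivial coboundary in its filling. The fillings of the
three edges of a triangle consist of `3 + 8 + 12 = 23` triangles. The stabilizer of `s` acts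
transitively on the triangles, so translating the cone by a random element makes each of these
triangles uniform: for some translate the expected number of disagreeing edges of a triangle is at
most `23` times the fraction of triangles with nontrivial coboundary. As a triangle has three edges,
this gives expansion at least `3 / 23 > 1 / 13`.
-/

section Averaging

open scoped BigOperators

variable {G α M : Type*} [Group G] [MulAction G α] {T : Finset α}

lemma expect_smul_eq_expect_of_invariant [AddCommMonoid M] [Module ℚ≥0 M]
    (hT : ∀ γ : G, ∀ t ∈ T, γ • t ∈ T) (b : α → M) (γ : G) :
    𝔼 t ∈ T, b (γ • t) = 𝔼 t ∈ T, b t :=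
  Finset.expect_nbij' (γ • ·) (γ⁻¹ • ·) (hT γ) (hT γ⁻¹) (fun _ _ => inv_smul_smul γ _)
    (fun _ _ => smul_inv_smul γ _) fun _ _ => rfl

lemma expect_smul_eq_expect_of_transitive [Fintype G] [AddCommMonoid M] [Module ℚ≥0 M]
    (hT : ∀ γ : G, ∀ t ∈ T, γ • t ∈ T) (htrans : ∀ t ∈ T, ∀ t' ∈ T, ∃ γ : G, γ • t = t')
    (b : α → M) {p : α} (hp : p ∈ T) : 𝔼 γ : G, b (γ • p) = 𝔼 t ∈ T, b t := by
  have hconst : ∀ t ∈ T, 𝔼 γ : G, b (γ • t) = 𝔼 γ : G, b (γ • p) := fun t ht => by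
    obtain ⟨η, rfl⟩ := htrans p hp t ht
    exact Fintype.expect_equiv (Equiv.mulRight η) _ _ fun γ => by simp [mul_smul]
  calc 𝔼 γ : G, b (γ • p) = 𝔼 t ∈ T, 𝔼 γ : G, b (γ • t) := by
        rw [expect_congr rfl hconst, expect_const ⟨p, hp⟩]
    _ = 𝔼 γ : G, 𝔼 t ∈ T, b (γ • t) := expect_comm ..
    _ = 𝔼 t ∈ T, b t := by
        simp only [expect_smul_eq_expect_of_invariant hT, Fintype.expect_const]

lemma expect_sum_map_smul_eq [Fintype G] [Semiring M] [Module ℚ≥0 M]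
    (hT : ∀ γ : G, ∀ t ∈ T, γ • t ∈ T) (htrans : ∀ t ∈ T, ∀ t' ∈ T, ∃ γ : G, γ • t = t')
    (b : α → M) {l : List α} (hl : ∀ t ∈ l, t ∈ T) :
    𝔼 γ : G, (l.map fun t => b (γ • t)).sum = l.length * 𝔼 t ∈ T, b t := by
  induction l with
  | nil => simp
  | cons p l ih =>
    rw [List.forall_mem_cons] at hl
    simp only [List.map_cons, List.sum_cons, List.length_cons, Nat.cast_succ, expect_add_distrib,
      ih hl.2, expect_smul_eq_expect_of_transitive hT htrans b hl.1]
    rw [add_comm, add_one_mul]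

lemma exists_expect_le_length_mul_expect [Finite G] [Field M] [LinearOrder M]
    [IsStrictOrderedRing M]
    (hT : ∀ γ : G, ∀ t ∈ T, γ • t ∈ T) (htrans : ∀ t ∈ T, ∀ t' ∈ T, ∃ γ : G, γ • t = t')
    (b : α → M) (cost : G → α → M) (filling : α → List α) {n : ℕ}
    (hlength : ∀ p ∈ T, (filling p).length = n) (hfilling : ∀ p ∈ T, ∀ t ∈ filling p, t ∈ T)
    (hcost : ∀ γ : G, ∀ p ∈ T, cost γ (γ • p) ≤ ((filling p).map fun t => b (γ • t)).sum) :
    ∃ γ, 𝔼 p ∈ T, cost γ p ≤ n * 𝔼 t ∈ T, b t := by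
  have := Fintype.ofFinite G
  suffices h : 𝔼 γ, 𝔼 p ∈ T, cost γ p ≤ n * 𝔼 t ∈ T, b t by
    obtain ⟨γ, -, hγ⟩ := exists_le_of_expect_le univ_nonempty h
    exact ⟨γ, hγ⟩
  calc 𝔼 γ, 𝔼 p ∈ T, cost γ p = 𝔼 γ, 𝔼 p ∈ T, cost γ (γ • p) :=
        expect_congr rfl fun γ _ => (expect_smul_eq_expect_of_invariant hT (cost γ) γ).symm
    _ = 𝔼 p ∈ T, 𝔼 γ, cost γ (γ • p) := expect_comm ..
    _ ≤ 𝔼 p ∈ T, 𝔼 γ : G, ((filling p).map fun t => b (γ • t)).sum :=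
        expect_le_expect fun p hp => expect_le_expect fun γ _ => hcost γ p hp
    _ = 𝔼 _p ∈ T, n * 𝔼 t ∈ T, b t := expect_congr rfl fun p hp => by
        rw [expect_sum_map_smul_eq hT htrans b (hfilling p hp), hlength p hp]
    _ = n * 𝔼 t ∈ T, b t := by
        rcases T.eq_empty_or_nonempty with rfl | hne
        · simp
        · exact expect_const hne _

end Averaging

section Cochain

open scoped BigOperators

variable {α Γ : Type*} [Group Γ]

/-- The coboundary of the cochain `f` vanishes on the triangle `p`. The equation only evaluates `f`
on edges oriented along the order of the vertices of `p`, so `f` need not be antisymmetric. -/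
def IsFlat (f : α → α → Γ) (p : α × α × α) : Prop :=
  f p.1 p.2.1 * f p.2.1 p.2.2 = f p.1 p.2.2

/-- The indicator of the triangles on which the coboundary of `f` does not vanish. -/
noncomputable def curvature (f : α → α → Γ) (p : α × α × α) : ℝ :=
  if IsFlat f p then 0 else 1

/-- The number of edges of the triangle `p` on which `f` differs from the coboundary of the vertex
labelling that is `g₀`, `g₁`, `g₂` on the first, second and third vertices of the triangles. -/
noncomputable def edgeErrors (f : α → α → Γ) (g₀ g₁ g₂ : α → Γ) (p : α × α × α) : ℝ :=
  (if f p.1 p.2.1 = g₀ p.1 * (g₁ p.2.1)⁻¹ then 0 else 1) +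
    (if f p.1 p.2.2 = g₀ p.1 * (g₂ p.2.2)⁻¹ then 0 else 1) +
    (if f p.2.1 p.2.2 = g₁ p.2.1 * (g₂ p.2.2)⁻¹ then 0 else 1)

lemma curvature_nonneg (f : α → α → Γ) (p : α × α × α) : 0 ≤ curvature f p := by
  unfold curvature
  split_ifs <;> norm_num

lemma ite_le_sum_curvature {f : α → α → Γ} {l : List (α × α × α)} {Q : Prop}
    (h : (∀ t ∈ l, IsFlat f t) → Q) : (if Q then 0 else 1) ≤ (l.map (curvature f)).sum := by
  have hnonneg : ∀ x ∈ l.map (curvature f), 0 ≤ x :=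
    List.forall_mem_map.2 fun t _ => curvature_nonneg f t
  split_ifs with hQ
  · exact List.sum_nonneg hnonneg
  · obtain ⟨t, ht, hcurved⟩ : ∃ t ∈ l, ¬ IsFlat f t := by
      contrapose! hQ
      exact h hQ
    calc (1 : ℝ) = curvature f t := (if_neg hcurved).symm
      _ ≤ _ := List.single_le_sum hnonneg _ (List.mem_map_of_mem ht)

/-- A bounded cone over the tripartite complex with triangles `T`: choices of vertices which, from
any triangle `(a, b, c)` of `T`, produce the triangles used to contract its edges to `apex`. -/
structure TriangleCone (T : Set (α × α × α)) where
  apex : α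
  raise₁ : α → α
  raise₂ : α → α
  base : α → α
  mid : α → α → α
  apex_mem {a b c : α} : (a, b, c) ∈ T → (apex, raise₁ a, raise₂ b) ∈ T
  raise₁_mem {a b c : α} : (a, b, c) ∈ T → (a, raise₁ a, raise₂ b) ∈ T
  raise₂_mem {a b c : α} : (a, b, c) ∈ T → (a, b, raise₂ b) ∈ T
  mid_mem {a b c : α} : (a, b, c) ∈ T → (a, mid a c, c) ∈ T
  base_mem {a b c : α} : (a, b, c) ∈ T → (base c, mid a c, c) ∈ T

namespace TriangleCone

variable {T : Set (α × α × α)} (C : TriangleCone T) (f : α → α → Γ)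

/-- The value of `f` along the path `a, raise₁ a, apex`. -/
def potential₀ (a : α) : Γ := f a (C.raise₁ a) * (f C.apex (C.raise₁ a))⁻¹

/-- The value of `f` along the path `b, raise₂ b, apex`. -/
def potential₁ (b : α) : Γ := f b (C.raise₂ b) * (f C.apex (C.raise₂ b))⁻¹

/-- The value of `f` along the path `c, base c, raise₁ (base c), apex`. -/
def potential₂ (c : α) : Γ := (f (C.base c) c)⁻¹ * C.potential₀ f (C.base c)

/-- Triangles filling the loop through `apex` and the edge from the first vertex `a` to the second
vertex `b`. -/
def filling₀₁ (a b : α) : List (α × α × α) :=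
  [(C.apex, C.raise₁ a, C.raise₂ b), (a, C.raise₁ a, C.raise₂ b), (a, b, C.raise₂ b)]

/-- Triangles filling the loop through `apex` and the edge from the first vertex `a` to the third
vertex `c`. -/
def filling₀₂ (a c : α) : List (α × α × α) :=
  [(a, C.mid a c, c), (C.base c, C.mid a c, c)] ++
    (C.filling₀₁ a (C.mid a c) ++ C.filling₀₁ (C.base c) (C.mid a c))

/-- Triangles filling the loop through `apex` and the edge from `b` to `c` of the triangle
`(a, b, c)`. -/
def filling₁₂ (a b c : α) : List (α × α × α) :=
  (a, b, c) :: (C.filling₀₁ a b ++ C.filling₀₂ a c)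

/-- The fillings of the three edges of a triangle, with multiplicity. -/
def filling (p : α × α × α) : List (α × α × α) :=
  C.filling₀₁ p.1 p.2.1 ++ C.filling₀₂ p.1 p.2.2 ++ C.filling₁₂ p.1 p.2.1 p.2.2

lemma length_filling (p : α × α × α) : (C.filling p).length = 23 := rfl

variable {a b c : α}

lemma filling₀₁_subset (h : (a, b, c) ∈ T) : ∀ t ∈ C.filling₀₁ a b, t ∈ T := by
  simp only [filling₀₁, List.forall_mem_cons, List.not_mem_nil, IsEmpty.forall_iff, implies_true,
    and_true]
  exact ⟨C.apex_mem h, C.raise₁_mem h, C.raise₂_mem h⟩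

lemma filling₀₂_subset (h : (a, b, c) ∈ T) : ∀ t ∈ C.filling₀₂ a c, t ∈ T := by
  simp only [filling₀₂, List.forall_mem_append, List.forall_mem_cons, List.not_mem_nil,
    IsEmpty.forall_iff, implies_true, and_true]
  exact ⟨⟨C.mid_mem h, C.base_mem h⟩, C.filling₀₁_subset (C.mid_mem h),
    C.filling₀₁_subset (C.base_mem h)⟩

lemma filling_subset {p : α × α × α} (hp : p ∈ T) : ∀ t ∈ C.filling p, t ∈ T := by
  simp only [filling, filling₁₂, List.forall_mem_append, List.forall_mem_cons]
  exact ⟨⟨C.filling₀₁_subset hp, C.filling₀₂_subset hp⟩, hp, C.filling₀₁_subset hp,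
    C.filling₀₂_subset hp⟩

variable {f}

lemma eq_potential₀₁ (h : ∀ t ∈ C.filling₀₁ a b, IsFlat f t) :
    f a b = C.potential₀ f a * (C.potential₁ f b)⁻¹ := by
  simp only [filling₀₁, List.forall_mem_cons, IsFlat] at h
  obtain ⟨hapex, ha, hb, -⟩ := h
  rw [potential₀, potential₁, ← hapex, eq_mul_inv_of_mul_eq hb, ← ha]
  group

lemma eq_potential₀₂ (h : ∀ t ∈ C.filling₀₂ a c, IsFlat f t) :
    f a c = C.potential₀ f a * (C.potential₂ f c)⁻¹ := by
  simp only [filling₀₂, List.forall_mem_append, List.forall_mem_cons] at h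
  obtain ⟨⟨hmid, hbase, -⟩, ha, hb⟩ := h
  simp only [IsFlat] at hmid hbase
  rw [potential₂, ← hmid, ← hbase, C.eq_potential₀₁ ha, C.eq_potential₀₁ hb]
  group

lemma eq_potential₁₂ (h : ∀ t ∈ C.filling₁₂ a b c, IsFlat f t) :
    f b c = C.potential₁ f b * (C.potential₂ f c)⁻¹ := by
  simp only [filling₁₂, List.forall_mem_append, List.forall_mem_cons] at h
  obtain ⟨habc, h₀₁, h₀₂⟩ := h
  simp only [IsFlat] at habc
  rw [eq_inv_mul_of_mul_eq habc, C.eq_potential₀₁ h₀₁, C.eq_potential₀₂ h₀₂]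
  group

variable (f)

lemma edgeErrors_potential_le (p : α × α × α) :
    edgeErrors f (C.potential₀ f) (C.potential₁ f) (C.potential₂ f) p ≤
      ((C.filling p).map (curvature f)).sum := by
  simp only [filling, List.map_append, List.sum_append]
  exact add_le_add_three (ite_le_sum_curvature C.eq_potential₀₁)
    (ite_le_sum_curvature C.eq_potential₀₂) (ite_le_sum_curvature C.eq_potential₁₂)

end TriangleCone

theorem exists_expect_edgeErrors_le_of_triangleCone {G : Type*} [Group G] [Finite G] [MulAction G α]
    {T : Finset (α × α × α)} (C : TriangleCone (T : Set (α × α × α)))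
    (hT : ∀ γ : G, ∀ t ∈ T, γ • t ∈ T) (htrans : ∀ t ∈ T, ∀ t' ∈ T, ∃ γ : G, γ • t = t')
    (f : α → α → Γ) :
    ∃ g₀ g₁ g₂ : α → Γ, 𝔼 p ∈ T, edgeErrors f g₀ g₁ g₂ p ≤ 23 * 𝔼 p ∈ T, curvature f p := by
  let pullback (γ : G) (a b : α) : Γ := f (γ • a) (γ • b)
  obtain ⟨γ, hγ⟩ := exists_expect_le_length_mul_expect hT htrans (curvature f)
    (fun γ => edgeErrors f (fun a => C.potential₀ (pullback γ) (γ⁻¹ • a))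
      (fun b => C.potential₁ (pullback γ) (γ⁻¹ • b)) fun c => C.potential₂ (pullback γ) (γ⁻¹ • c))
    C.filling (fun p _ => C.length_filling p) (fun p hp => C.filling_subset hp) fun γ p _ => by
      simp only [edgeErrors, Prod.smul_fst, Prod.smul_snd, inv_smul_smul]
      exact C.edgeErrors_potential_le (pullback γ) p
  exact ⟨_, _, _, hγ⟩

end Cochain

section Flags

open Module (finrank)

variable {K V : Type*} [DivisionRing K] [AddCommGroup V] [Module K V] [FiniteDimensional K V]

lemma finrank_eq_succ_of_covBy {P Q : Submodule K V} (h : P ⋖ Q) :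
    finrank K Q = finrank K P + 1 := by
  have hsimple := isSimpleModule_iff_finrank_eq_one.1 ((covBy_iff_quot_is_simple h.le).1 h)
  have hrank := (P.submoduleOf Q).finrank_quotient_add_finrank
  rw [(Submodule.submoduleOfEquivOfLe h.le).finrank_eq] at hrank
  exact hrank.symm.trans (by rw [add_comm]; exact congrArg _ hsimple)

lemma finrank_le_succ_of_wcovBy {P Q : Submodule K V} (h : P ⩿ Q) :
    finrank K Q ≤ finrank K P + 1 := by
  rcases h.covBy_or_eq with h | rfl
  · exact (finrank_eq_succ_of_covBy h).le
  · exact Nat.le_succ _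

lemma exists_mem_flag_finrank_eq (M : Flag (Submodule K V)) {k : ℕ} (hk : k ≤ finrank K V) :
    ∃ P ∈ M, finrank K P = k := by
  induction k with
  | zero => exact ⟨⊥, M.bot_mem, finrank_bot K V⟩
  | succ k ih =>
    obtain ⟨P, hPM, hP⟩ := ih (Nat.le_of_succ_le hk)
    have hmax : ¬ IsMax (⟨P, hPM⟩ : M) := by
      rw [isMax_iff_eq_top]
      intro h
      have hPtop : P = ⊤ := congrArg Subtype.val h
      rw [hPtop, finrank_top] at hP
      omega
    obtain ⟨Q, hPQ⟩ := exists_covBy_of_wellFoundedLT hmax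
    exact ⟨Q, Q.2, by rw [finrank_eq_succ_of_covBy (Flag.coe_covBy_coe.2 hPQ), hP]⟩

lemma eq_of_le_or_ge_of_finrank_eq {P Q : Submodule K V} (h : P ≤ Q ∨ Q ≤ P)
    (hr : finrank K P = finrank K Q) : P = Q := by
  rcases h with h | h
  · exact Submodule.eq_of_le_of_finrank_eq h hr
  · exact (Submodule.eq_of_le_of_finrank_eq h hr.symm).symm

lemma le_of_le_or_ge_of_finrank_le {P Q : Submodule K V} (h : P ≤ Q ∨ Q ≤ P)
    (hr : finrank K P ≤ finrank K Q) : P ≤ Q :=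
  h.elim id fun h => (Submodule.eq_of_le_of_finrank_le h hr).ge

lemma finrank_basis_flag {n : ℕ} (b : Module.Basis (Fin n) K V) (k : Fin (n + 1)) :
    finrank K (b.flag k) = k := by
  induction k using Fin.induction with
  | zero => simp
  | succ k ih => rw [finrank_eq_succ_of_covBy (b.flag_covBy k), ih, Fin.val_castSucc, Fin.val_succ]

lemma exists_basis_forall_flag_mem (M : Flag (Submodule K V)) :
    ∃ b : Module.Basis (Fin (finrank K V)) K V, ∀ k, b.flag k ∈ M := by
  choose X hXM hX using fun k : Fin (finrank K V + 1) =>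
    exists_mem_flag_finrank_eq M (Nat.le_of_lt_succ k.2)
  have hmono {j k} (hjk : j ≤ k) : X j ≤ X k :=
    le_of_le_or_ge_of_finrank_le (M.le_or_le (hXM j) (hXM k)) (by rw [hX, hX]; exact hjk)
  have hnew (j : Fin (finrank K V)) : ∃ x ∈ X j.succ, x ∉ X j.castSucc := by
    refine SetLike.not_le_iff_exists.1 fun h => ?_
    have := Submodule.finrank_mono h
    rw [hX, hX, Fin.val_succ, Fin.val_castSucc] at this
    omega
  choose x hx hx' using hnew
  have hXspan (k) : X k ≤ Submodule.span K (Set.range x) := by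
    induction k using Fin.induction with
    | zero => exact (Submodule.finrank_eq_zero.1 (hX 0)).trans_le bot_le
    | succ k ih =>
      have hle : (K ∙ x k) ⊔ X k.castSucc ≤ X k.succ :=
        sup_le (by simpa using hx k) (hmono k.castSucc_lt_succ.le)
      have hrank := finrank_eq_succ_of_covBy (Submodule.covBy_span_singleton_sup (hx' k))
      rw [← Submodule.eq_of_le_of_finrank_eq hle (by rw [hrank, hX, hX]; rfl)]
      exact sup_le (Submodule.span_mono (by simp)) ih
  have htop : ⊤ ≤ Submodule.span K (Set.range x) := by
    rw [← Submodule.eq_top_of_finrank_eq (hX (Fin.last _))]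
    exact hXspan _
  let b := basisOfTopLeSpanOfCardEqFinrank x htop (by simp)
  have hb (k) : b.flag k = X k := by
    refine Submodule.eq_of_le_of_finrank_eq (b.flag_le_iff.2 fun j hj => ?_) ?_
    · rw [coe_basisOfTopLeSpanOfCardEqFinrank]
      exact hmono (Fin.castSucc_lt_iff_succ_le.1 hj) (hx j)
    · rw [finrank_basis_flag, hX]
  exact ⟨b, fun k => hb k ▸ hXM k⟩

lemma exists_basis_subset_range_flag {c : Set (Submodule K V)} (hc : IsChain (· ≤ ·) c) :
    ∃ b : Module.Basis (Fin (finrank K V)) K V, c ⊆ Set.range b.flag := by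
  obtain ⟨M, hcM⟩ := hc.exists_subset_flag
  obtain ⟨b, hb⟩ := exists_basis_forall_flag_mem M
  exact ⟨b, fun P hP => ⟨⟨finrank K P, Nat.lt_succ_of_le P.finrank_le⟩,
    eq_of_le_or_ge_of_finrank_eq (M.le_or_le (hb _) (hcM hP)) (finrank_basis_flag b _)⟩⟩

lemma exists_finrank_sup_flag_eq {n : ℕ} (b : Module.Basis (Fin n) K V) {U : Submodule K V} {m : ℕ}
    (hU : finrank K U ≤ m) (hm : m ≤ finrank K V) : ∃ k, finrank K ↥(U ⊔ b.flag k) = m := by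
  suffices h : ∀ k, m ≤ finrank K ↥(U ⊔ b.flag k) → ∃ k, finrank K ↥(U ⊔ b.flag k) = m from
    h (Fin.last n) (by rwa [b.flag_last, sup_top_eq, finrank_top])
  intro k
  induction k using Fin.induction with
  | zero =>
    intro h
    have hzero : U ⊔ b.flag 0 = U := by rw [b.flag_zero, sup_bot_eq]
    exact ⟨0, by rw [hzero] at h ⊢; exact le_antisymm hU h⟩
  | succ k ih =>
    intro h
    have hstep : finrank K ↥(U ⊔ b.flag k.succ) ≤ finrank K ↥(U ⊔ b.flag k.castSucc) + 1 := by
      rw [b.flag_succ, sup_left_comm]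
      exact finrank_le_succ_of_wcovBy (Submodule.wcovBy_span_singleton_sup _ _)
    rcases Nat.lt_or_ge (finrank K ↥(U ⊔ b.flag k.castSucc)) m with hlt | hge
    · exact ⟨k.succ, by omega⟩
    · exact ih hge

lemma sup_flag_le_sup_flag_of_finrank_le {n : ℕ} (b : Module.Basis (Fin n) K V) {U : Submodule K V}
    {j k : Fin (n + 1)} (h : finrank K ↥(U ⊔ b.flag j) ≤ finrank K ↥(U ⊔ b.flag k)) :
    U ⊔ b.flag j ≤ U ⊔ b.flag k :=
  le_of_le_or_ge_of_finrank_le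
    ((le_total j k).imp (fun h => sup_le_sup_left (b.flag_mono h) U)
      fun h => sup_le_sup_left (b.flag_mono h) U) h

end Flags

section FlagRaise

open Module (finrank)

variable {K V : Type*} [DivisionRing K] [AddCommGroup V] [Module K V] {n : ℕ}

/-- The largest of the subspaces `U ⊔ b.flag k` whose dimension is at most `m`. -/
def flagRaise (b : Module.Basis (Fin n) K V) (m : ℕ) (U : Submodule K V) : Submodule K V :=
  ⨆ k, ⨆ _ : finrank K ↥(U ⊔ b.flag k) ≤ m, U ⊔ b.flag k

variable {b : Module.Basis (Fin n) K V} {m : ℕ} {U : Submodule K V}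

lemma sup_flag_le_flagRaise {k : Fin (n + 1)} (h : finrank K ↥(U ⊔ b.flag k) ≤ m) :
    U ⊔ b.flag k ≤ flagRaise b m U :=
  le_iSup₂_of_le k h le_rfl

lemma le_flagRaise (h : finrank K U ≤ m) : U ≤ flagRaise b m U := by
  have hzero : U ⊔ b.flag 0 = U := by rw [b.flag_zero, sup_bot_eq]
  exact hzero.ge.trans (sup_flag_le_flagRaise (by rwa [hzero]))

variable [FiniteDimensional K V]

lemma flagRaise_le_flagRaise {m' : ℕ} {U' : Submodule K V} (hUU' : U ≤ U')
    (h : finrank K ↥(U' ⊔ flagRaise b m U) ≤ m') : flagRaise b m U ≤ flagRaise b m' U' := by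
  refine iSup₂_le fun k hk => ?_
  have hle : b.flag k ≤ flagRaise b m U := le_sup_right.trans (sup_flag_le_flagRaise hk)
  have hrank := (Submodule.finrank_mono (sup_le_sup_left hle U')).trans h
  exact (sup_le_sup_right hUU' _).trans (sup_flag_le_flagRaise hrank)

lemma exists_flagRaise_eq_sup_flag (hU : finrank K U ≤ m) (hm : m ≤ finrank K V) :
    ∃ k, flagRaise b m U = U ⊔ b.flag k ∧ finrank K (flagRaise b m U) = m := by
  obtain ⟨k, hk⟩ := exists_finrank_sup_flag_eq b hU hm
  have heq : flagRaise b m U = U ⊔ b.flag k :=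
    le_antisymm (iSup₂_le fun j hj => sup_flag_le_sup_flag_of_finrank_le b (hj.trans hk.ge))
      (sup_flag_le_flagRaise hk.le)
  exact ⟨k, heq, by rw [heq, hk]⟩

end FlagRaise

lemma isChain_insert_iff_forall {α : Type*} [Preorder α] {s : Set α} {a : α}
    (hs : IsChain (· ≤ ·) s) : IsChain (· ≤ ·) (insert a s) ↔ ∀ x ∈ s, x ≤ a ∨ a ≤ x :=
  ⟨fun h _ hx => h.total (Set.mem_insert_of_mem _ hx) (Set.mem_insert _ _),
    fun h => hs.insert fun x hx _ => (h x hx).symm⟩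

section Link

open Module (finrank)

variable {K V : Type*} [DivisionRing K] [AddCommGroup V] [Module K V]
  {s : Set (Submodule K V)} {i i₀ i₁ i₂ m : ℕ} {U W : Submodule K V}

/-- `U` is an `i`-dimensional subspace comparable with every member of `s`; when `s` is a chain,
these are the vertices of the link of `s` in dimension `i`. -/
structure IsLinkVertex (s : Set (Submodule K V)) (i : ℕ) (U : Submodule K V) : Prop where
  finrank_eq : finrank K U = i
  comparable : ∀ S ∈ s, S ≤ U ∨ U ≤ S

/-- The triangles of the link of `s` in the dimensions `i₀`, `i₁`, `i₂`, listed by dimension. -/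
def linkTriangleSet (s : Set (Submodule K V)) (i₀ i₁ i₂ : ℕ) :
    Set (Submodule K V × Submodule K V × Submodule K V) :=
  {p | IsLinkVertex s i₀ p.1 ∧ IsLinkVertex s i₁ p.2.1 ∧ IsLinkVertex s i₂ p.2.2 ∧
    p.1 ≤ p.2.1 ∧ p.2.1 ≤ p.2.2}

variable [FiniteDimensional K V]

lemma IsLinkVertex.le_of_finrank_le (hU : IsLinkVertex s i U) (hW : W ∈ s)
    (h : i ≤ finrank K W) : U ≤ W :=
  le_of_le_or_ge_of_finrank_le (hU.comparable W hW).symm (hU.finrank_eq.trans_le h)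

lemma IsLinkVertex.ge_of_finrank_le (hU : IsLinkVertex s i U) (hW : W ∈ s)
    (h : finrank K W ≤ i) : W ≤ U :=
  le_of_le_or_ge_of_finrank_le (hU.comparable W hW) (h.trans_eq hU.finrank_eq.symm)

lemma mem_linkTriangleSet_iff (hs : IsChain (· ≤ ·) s) (h01 : i₀ ≤ i₁) (h12 : i₁ ≤ i₂)
    {p : Submodule K V × Submodule K V × Submodule K V} :
    p ∈ linkTriangleSet s i₀ i₁ i₂ ↔ finrank K p.1 = i₀ ∧ finrank K p.2.1 = i₁ ∧
      finrank K p.2.2 = i₂ ∧ IsChain (· ≤ ·) (insert p.1 (insert p.2.1 (insert p.2.2 s))) := by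
  constructor
  · rintro ⟨h₀, h₁, h₂, h₀₁, h₁₂⟩
    refine ⟨h₀.finrank_eq, h₁.finrank_eq, h₂.finrank_eq, ?_⟩
    have hchain₂ := (isChain_insert_iff_forall hs).2 h₂.comparable
    have hchain₁ := (isChain_insert_iff_forall hchain₂).2
      (Set.forall_mem_insert.2 ⟨Or.inr h₁₂, h₁.comparable⟩)
    exact (isChain_insert_iff_forall hchain₁).2 (Set.forall_mem_insert.2
      ⟨Or.inr h₀₁, Set.forall_mem_insert.2 ⟨Or.inr (h₀₁.trans h₁₂), h₀.comparable⟩⟩)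
  · rintro ⟨h₀, h₁, h₂, hchain⟩
    have hle {i j U W} (hU : U ∈ insert p.1 (insert p.2.1 (insert p.2.2 s)))
        (hW : W ∈ insert p.1 (insert p.2.1 (insert p.2.2 s))) (hUi : finrank K U = i)
        (hWj : finrank K W = j) (hij : i ≤ j) : U ≤ W :=
      le_of_le_or_ge_of_finrank_le (hchain.total hU hW) (by rwa [hUi, hWj])
    have hvertex {i U} (hU : U ∈ insert p.1 (insert p.2.1 (insert p.2.2 s)))
        (hUi : finrank K U = i) : IsLinkVertex s i U :=
      ⟨hUi, fun S hS => hchain.total (by simp [hS]) hU⟩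
    exact ⟨hvertex (by simp) h₀, hvertex (by simp) h₁, hvertex (by simp) h₂,
      hle (by simp) (by simp) h₀ h₁ h01, hle (by simp) (by simp) h₁ h₂ h12⟩

lemma finrank_sup_le_of_isLinkVertex
    (h : 2 * i ≤ m ∨ ∃ S ∈ s, i ≤ finrank K S ∧ finrank K S ≤ m)
    (hU : IsLinkVertex s i U) (hW : IsLinkVertex s i W) : finrank K ↥(U ⊔ W) ≤ m := by
  rcases h with h | ⟨S, hS, hi, hm⟩
  · have := Submodule.finrank_add_le_finrank_add_finrank U W
    rw [hU.finrank_eq, hW.finrank_eq] at this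
    omega
  · exact (Submodule.finrank_mono
      (sup_le (hU.le_of_finrank_le hS hi) (hW.le_of_finrank_le hS hi))).trans hm

lemma finrank_sup_le_of_le_inf {P : Submodule K V} (h : 2 * i ≤ m + finrank K P)
    (hU : finrank K U = i) (hW : finrank K W = i) (hP : P ≤ U ⊓ W) :
    finrank K ↥(U ⊔ W) ≤ m := by
  have hinf := Submodule.finrank_mono hP
  have hsum := Submodule.finrank_sup_add_finrank_inf_eq U W
  omega

lemma finrank_sup_le_of_isLinkVertex_of_le_inf {P : Submodule K V}
    (h : 2 * i ≤ m + finrank K P ∨ (∃ S ∈ s, finrank K S ≤ i ∧ 2 * i ≤ m + finrank K S) ∨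
      ∃ S ∈ s, i ≤ finrank K S ∧ finrank K S ≤ m)
    (hU : IsLinkVertex s i U) (hW : IsLinkVertex s i W) (hP : P ≤ U ⊓ W) :
    finrank K ↥(U ⊔ W) ≤ m := by
  rcases h with h | ⟨S, hS, hSi, h⟩ | h
  · exact finrank_sup_le_of_le_inf h hU.finrank_eq hW.finrank_eq hP
  · exact finrank_sup_le_of_le_inf h hU.finrank_eq hW.finrank_eq
      (le_inf (hU.ge_of_finrank_le hS hSi) (hW.ge_of_finrank_le hS hSi))
  · exact finrank_sup_le_of_isLinkVertex (Or.inr h) hU hW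

lemma isLinkVertex_flag {n : ℕ} {b : Module.Basis (Fin n) K V} (hb : s ⊆ Set.range b.flag)
    (k : Fin (n + 1)) : IsLinkVertex s k (b.flag k) where
  finrank_eq := finrank_basis_flag b k
  comparable S hS := by
    obtain ⟨j, rfl⟩ := hb hS
    exact (le_total j k).imp (fun h => b.flag_mono h) fun h => b.flag_mono h

lemma exists_isLinkVertex_between (hs : IsChain (· ≤ ·) s)
    (hU : ∀ S ∈ s, S ≤ U ∨ U ≤ S) (hW : ∀ S ∈ s, S ≤ W ∨ W ≤ S) (hUW : U ≤ W)
    (hUi : finrank K U ≤ i) (hiW : i ≤ finrank K W) :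
    ∃ P, IsLinkVertex s i P ∧ U ≤ P ∧ P ≤ W := by
  have hchain : IsChain (· ≤ ·) (insert U (insert W s)) := by
    rw [isChain_insert_iff_forall ((isChain_insert_iff_forall hs).2 hW), Set.forall_mem_insert]
    exact ⟨Or.inr hUW, hU⟩
  obtain ⟨b, hb⟩ := exists_basis_subset_range_flag hchain
  have hi := isLinkVertex_flag hb ⟨i, Nat.lt_succ_of_le (hiW.trans W.finrank_le)⟩
  exact ⟨_, ⟨hi.finrank_eq, fun S hS => hi.comparable S (Or.inr (Or.inr hS))⟩,
    hi.ge_of_finrank_le (Or.inl rfl) hUi, hi.le_of_finrank_le (Or.inr (Or.inl rfl)) hiW⟩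

lemma IsLinkVertex.flagRaise {n : ℕ} {b : Module.Basis (Fin n) K V} (hb : s ⊆ Set.range b.flag)
    (hU : IsLinkVertex s i U) (him : i ≤ m) (hm : m ≤ finrank K V) :
    IsLinkVertex s m (flagRaise b m U) := by
  obtain ⟨k, hk, hrank⟩ := exists_flagRaise_eq_sup_flag (b := b) (hU.finrank_eq.trans_le him) hm
  refine ⟨hrank, fun S hS => ?_⟩
  rw [hk]
  rcases hU.comparable S hS with hSU | hUS
  · exact Or.inl (hSU.trans le_sup_left)
  · exact ((isLinkVertex_flag hb k).comparable S hS).imp (·.trans le_sup_right) (sup_le hUS)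

lemma exists_isLinkVertex_le (hs : IsChain (· ≤ ·) s) (hW : ∀ S ∈ s, S ≤ W ∨ W ≤ S)
    (hiW : i ≤ finrank K W) : ∃ P, IsLinkVertex s i P ∧ P ≤ W := by
  obtain ⟨P, hP, -, hPW⟩ :=
    exists_isLinkVertex_between hs (fun S _ => Or.inr bot_le) hW bot_le (by simp) hiW
  exact ⟨P, hP, hPW⟩

lemma exists_isLinkVertex_between_sup {B : Submodule K V} (hs : IsChain (· ≤ ·) s)
    (hU : IsLinkVertex s i₀ U) (hB : IsLinkVertex s i₀ B) (hW : IsLinkVertex s i₂ W)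
    (hUW : U ≤ W) (hBW : B ≤ W) (hsup : finrank K ↥(U ⊔ B) ≤ i₁) (h12 : i₁ ≤ i₂) :
    ∃ M, IsLinkVertex s i₁ M ∧ U ⊔ B ≤ M ∧ M ≤ W := by
  refine exists_isLinkVertex_between hs (fun S hS => ?_) hW.comparable (sup_le hUW hBW) hsup
    (h12.trans_eq hW.finrank_eq.symm)
  rcases hU.comparable S hS with h | h
  · exact Or.inl (h.trans le_sup_left)
  · exact (hB.comparable S hS).imp (·.trans le_sup_right) (sup_le h)

lemma nonempty_triangleCone_linkTriangleSet (hs : IsChain (· ≤ ·) s) (h01 : i₀ ≤ i₁)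
    (h12 : i₁ ≤ i₂) (h2 : i₂ ≤ finrank K V)
    (hsup₀ : ∀ U W, IsLinkVertex s i₀ U → IsLinkVertex s i₀ W → finrank K ↥(U ⊔ W) ≤ i₁)
    (hsup₁ : ∀ P U W, IsLinkVertex s i₀ P → IsLinkVertex s i₁ U → IsLinkVertex s i₁ W →
      P ≤ U ⊓ W → finrank K ↥(U ⊔ W) ≤ i₂) :
    Nonempty (TriangleCone (linkTriangleSet s i₀ i₁ i₂)) := by
  obtain ⟨b, hb⟩ := exists_basis_subset_range_flag hs
  let A := b.flag ⟨i₀, Nat.lt_succ_of_le (h01.trans (h12.trans h2))⟩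
  have hA : IsLinkVertex s i₀ A := isLinkVertex_flag hb ⟨i₀, _⟩
  have raise₁ {U} (hU : IsLinkVertex s i₀ U) :
      IsLinkVertex s i₁ (flagRaise b i₁ U) ∧ U ≤ flagRaise b i₁ U ∧ A ≤ flagRaise b i₁ U :=
    ⟨hU.flagRaise hb h01 (h12.trans h2), le_flagRaise (hU.finrank_eq.trans_le h01),
      le_sup_right.trans (sup_flag_le_flagRaise (hsup₀ U A hU hA))⟩
  have raise₂ {U} (hU : IsLinkVertex s i₁ U) :
      IsLinkVertex s i₂ (flagRaise b i₂ U) ∧ U ≤ flagRaise b i₂ U :=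
    ⟨hU.flagRaise hb h12 h2, le_flagRaise (hU.finrank_eq.trans_le h12)⟩
  have raise₁₂ {U₀ U₁} (h₀ : IsLinkVertex s i₀ U₀) (h₁ : IsLinkVertex s i₁ U₁) (hle : U₀ ≤ U₁) :
      flagRaise b i₁ U₀ ≤ flagRaise b i₂ U₁ :=
    flagRaise_le_flagRaise hle
      (hsup₁ U₀ _ _ h₀ h₁ (raise₁ h₀).1 (le_inf hle (raise₁ h₀).2.1))
  choose! base hbase using fun U₂ (h₂ : IsLinkVertex s i₂ U₂) =>
    exists_isLinkVertex_le hs h₂.comparable ((h01.trans h12).trans_eq h₂.finrank_eq.symm)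
  choose! mid hmid using fun U₀ U₂ (h : IsLinkVertex s i₀ U₀ ∧ IsLinkVertex s i₂ U₂ ∧ U₀ ≤ U₂) =>
    have ⟨hB, hBle⟩ := hbase U₂ h.2.1
    exists_isLinkVertex_between_sup hs h.1 hB h.2.1 h.2.2 hBle (hsup₀ _ _ h.1 hB) h12
  have mid_mem {a b c} (h : (a, b, c) ∈ linkTriangleSet s i₀ i₁ i₂) :=
    hmid a c ⟨h.1, h.2.2.1, h.2.2.2.1.trans h.2.2.2.2⟩
  exact ⟨{
    apex := A
    raise₁ := flagRaise b i₁
    raise₂ := flagRaise b i₂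
    base := base
    mid := mid
    apex_mem := fun ⟨h₀, h₁, _, h₀₁, _⟩ =>
      ⟨hA, (raise₁ h₀).1, (raise₂ h₁).1, (raise₁ h₀).2.2, raise₁₂ h₀ h₁ h₀₁⟩
    raise₁_mem := fun ⟨h₀, h₁, _, h₀₁, _⟩ =>
      ⟨h₀, (raise₁ h₀).1, (raise₂ h₁).1, (raise₁ h₀).2.1, raise₁₂ h₀ h₁ h₀₁⟩
    raise₂_mem := fun ⟨h₀, h₁, _, h₀₁, _⟩ => ⟨h₀, h₁, (raise₂ h₁).1, h₀₁, (raise₂ h₁).2⟩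
    mid_mem := fun h =>
      have ⟨hM, hle, hMc⟩ := mid_mem h
      ⟨h.1, hM, h.2.2.1, le_sup_left.trans hle, hMc⟩
    base_mem := fun h =>
      have ⟨hM, hle, hMc⟩ := mid_mem h
      ⟨(hbase _ h.2.2.1).1, hM, h.2.2.1, le_sup_right.trans hle, hMc⟩ }⟩

end Link

section Stabilizer

open Module (finrank)
open scoped Pointwise

variable {K V : Type*} [DivisionRing K] [AddCommGroup V] [Module K V]

lemma basis_equiv_smul_flag {n : ℕ} (b c : Module.Basis (Fin n) K V) (k : Fin (n + 1)) :
    b.equiv c (Equiv.refl _) • b.flag k = c.flag k := by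
  rw [Submodule.pointwise_smul_def, Module.Basis.flag, Module.Basis.flag, Submodule.map_span,
    ← Set.image_comp]
  congr 2
  ext j
  simp

variable {s : Set (Submodule K V)} {i i₀ i₁ i₂ : ℕ} {U : Submodule K V}

lemma IsLinkVertex.smul (γ : fixingSubgroup (V ≃ₗ[K] V) s) (hU : IsLinkVertex s i U) :
    IsLinkVertex s i (γ • U) where
  finrank_eq := (LinearEquiv.finrank_map_eq _ _).trans hU.finrank_eq
  comparable S hS := by
    have hfix : γ • S = S := mem_fixingSubgroup_iff _ |>.1 γ.2 S hS
    rw [← hfix]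
    exact (hU.comparable S hS).imp (fun h => Submodule.map_mono h) fun h => Submodule.map_mono h

lemma smul_mem_linkTriangleSet (γ : fixingSubgroup (V ≃ₗ[K] V) s)
    {p : Submodule K V × Submodule K V × Submodule K V} (hp : p ∈ linkTriangleSet s i₀ i₁ i₂) :
    γ • p ∈ linkTriangleSet s i₀ i₁ i₂ :=
  ⟨hp.1.smul γ, hp.2.1.smul γ, hp.2.2.1.smul γ, Submodule.map_mono hp.2.2.2.1,
    Submodule.map_mono hp.2.2.2.2⟩

variable [FiniteDimensional K V]

lemma basis_equiv_smul_eq_of_finrank_eq {n : ℕ} {b c : Module.Basis (Fin n) K V}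
    {P Q : Submodule K V} (hP : P ∈ Set.range b.flag) (hQ : Q ∈ Set.range c.flag)
    (hr : finrank K P = finrank K Q) : b.equiv c (Equiv.refl _) • P = Q := by
  obtain ⟨j, rfl⟩ := hP
  obtain ⟨k, rfl⟩ := hQ
  rw [finrank_basis_flag, finrank_basis_flag] at hr
  rw [basis_equiv_smul_flag, Fin.ext hr]

lemma exists_smul_eq_of_mem_linkTriangleSet (hs : IsChain (· ≤ ·) s) (h01 : i₀ ≤ i₁)
    (h12 : i₁ ≤ i₂) {p p' : Submodule K V × Submodule K V × Submodule K V}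
    (hp : p ∈ linkTriangleSet s i₀ i₁ i₂) (hp' : p' ∈ linkTriangleSet s i₀ i₁ i₂) :
    ∃ γ : fixingSubgroup (V ≃ₗ[K] V) s, γ • p = p' := by
  obtain ⟨h₀, h₁, h₂, hchain⟩ := (mem_linkTriangleSet_iff hs h01 h12).1 hp
  obtain ⟨h₀', h₁', h₂', hchain'⟩ := (mem_linkTriangleSet_iff hs h01 h12).1 hp'
  obtain ⟨b, hb⟩ := exists_basis_subset_range_flag hchain
  obtain ⟨c, hc⟩ := exists_basis_subset_range_flag hchain'
  simp only [Set.insert_subset_iff] at hb hc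
  obtain ⟨hb₀, hb₁, hb₂, hbs⟩ := hb
  obtain ⟨hc₀, hc₁, hc₂, hcs⟩ := hc
  have hfix : b.equiv c (Equiv.refl _) ∈ fixingSubgroup (V ≃ₗ[K] V) s :=
    (mem_fixingSubgroup_iff _).2 fun S hS => basis_equiv_smul_eq_of_finrank_eq (hbs hS) (hcs hS) rfl
  exact ⟨⟨_, hfix⟩, Prod.ext (basis_equiv_smul_eq_of_finrank_eq hb₀ hc₀ (h₀.trans h₀'.symm))
    (Prod.ext (basis_equiv_smul_eq_of_finrank_eq hb₁ hc₁ (h₁.trans h₁'.symm))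
      (basis_equiv_smul_eq_of_finrank_eq hb₂ hc₂ (h₂.trans h₂'.symm)))⟩

end Stabilizer

section Expansion

open Module (finrank)
open scoped BigOperators Pointwise

variable {K V Γ : Type*} [DivisionRing K] [AddCommGroup V] [Module K V] [Group Γ]
  {i₀ i₁ i₂ : ℕ} {s : Set (Submodule K V)}

lemma exists_edgeErrors_eq_on_linkTriangleSet (h01 : i₀ < i₁) (h12 : i₁ < i₂)
    (f : Submodule K V → Submodule K V → Γ) (g₀ g₁ g₂ : Submodule K V → Γ) :
    ∃ g, ∀ p ∈ linkTriangleSet s i₀ i₁ i₂, edgeErrors f g g g p = edgeErrors f g₀ g₁ g₂ p := by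
  refine ⟨fun U : Submodule K V =>
    if finrank K U = i₀ then g₀ U else if finrank K U = i₁ then g₁ U else g₂ U, fun p hp => ?_⟩
  simp only [edgeErrors, hp.1.finrank_eq, hp.2.1.finrank_eq, hp.2.2.1.finrank_eq, if_true,
    h01.ne', h12.ne', (h01.trans h12).ne', if_false]

theorem stmt_8_general [Finite V] (h01 : i₀ < i₁) (h12 : i₁ < i₂) (h2 : i₂ ≤ finrank K V)
    (hchain : IsChain (· ≤ ·) s)
    (hcond1 : 2 * i₀ ≤ i₁ ∨ ∃ S ∈ s, i₀ < finrank K S ∧ finrank K S < i₁)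
    (hcond2 : 2 * i₁ ≤ i₂ + i₀ ∨
      (∃ S ∈ s, i₀ < finrank K S ∧ finrank K S < i₁ ∧ 2 * i₁ ≤ i₂ + finrank K S) ∨
      ∃ S ∈ s, i₁ < finrank K S ∧ finrank K S < i₂)
    {T : Finset (Submodule K V × Submodule K V × Submodule K V)}
    (hT : (T : Set (Submodule K V × _ × _)) = linkTriangleSet s i₀ i₁ i₂)
    (f : Submodule K V → Submodule K V → Γ) :
    ∃ g : Submodule K V → Γ, 𝔼 p ∈ T, edgeErrors f g g g p ≤ 23 * 𝔼 p ∈ T, curvature f p := by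
  have hmem {p} : p ∈ T ↔ p ∈ linkTriangleSet s i₀ i₁ i₂ := by rw [← hT, mem_coe]
  have : Finite (V ≃ₗ[K] V) := DFunLike.finite _
  obtain ⟨C⟩ : Nonempty (TriangleCone (T : Set (Submodule K V × _ × _))) := by
    rw [hT]
    refine nonempty_triangleCone_linkTriangleSet hchain h01.le h12.le h2 (fun U W =>
      finrank_sup_le_of_isLinkVertex ?_) fun P U W hP => finrank_sup_le_of_isLinkVertex_of_le_inf ?_
    · exact hcond1.imp_right fun ⟨S, hS, h, h'⟩ => ⟨S, hS, h.le, h'.le⟩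
    · rw [hP.finrank_eq]
      exact hcond2.imp_right (Or.imp (fun ⟨S, hS, _, h, h'⟩ => ⟨S, hS, h.le, h'⟩)
        fun ⟨S, hS, h, h'⟩ => ⟨S, hS, h.le, h'.le⟩)
  obtain ⟨g₀, g₁, g₂, hg⟩ := exists_expect_edgeErrors_le_of_triangleCone C
    (G := fixingSubgroup (V ≃ₗ[K] V) s)
    (fun γ t ht => hmem.2 (smul_mem_linkTriangleSet γ (hmem.1 ht)))
    (fun t ht t' ht' => exists_smul_eq_of_mem_linkTriangleSet hchain h01.le h12.le
      (hmem.1 ht) (hmem.1 ht')) f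
  obtain ⟨g, hg'⟩ := exists_edgeErrors_eq_on_linkTriangleSet (s := s) h01 h12 f g₀ g₁ g₂
  exact ⟨g, (expect_congr rfl fun p hp => hg' p (hmem.1 hp)).trans_le hg⟩

end Expansion

section LinkTriangles

open scoped BigOperators

variable {F : Type} [Field F] [Fintype F] {n i₀ i₁ i₂ : ℕ} {s : Finset (Submodule F (Fin n → F))}
  {Γ : Type} [Group Γ]

lemma coe_linkTriangles (h01 : i₀ ≤ i₁) (h12 : i₁ ≤ i₂)
    (hs : IsChain (· ≤ ·) (s : Set (Submodule F (Fin n → F)))) :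
    (linkTriangles F n i₀ i₁ i₂ s : Set (Submodule F (Fin n → F) × _ × _)) =
      linkTriangleSet (s : Set (Submodule F (Fin n → F))) i₀ i₁ i₂ := by
  ext p
  simp only [mem_linkTriangleSet_iff hs h01 h12, linkTriangles, coe_filter, mem_univ, true_and,
    coe_insert, Set.mem_ofPred_eq]

lemma triDist_eq_expect (f : Submodule F (Fin n → F) → Submodule F (Fin n → F) → Γ)
    (g : Submodule F (Fin n → F) → Γ) :
    triDist F n i₀ i₁ i₂ s Γ f g =
      (𝔼 p ∈ linkTriangles F n i₀ i₁ i₂ s, edgeErrors f g g g p) / 3 := by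
  rw [expect_div, expect_eq_sum_div_card]
  rfl

lemma triDist_nonneg (f : Submodule F (Fin n → F) → Submodule F (Fin n → F) → Γ)
    (g : Submodule F (Fin n → F) → Γ) : 0 ≤ triDist F n i₀ i₁ i₂ s Γ f g := by
  unfold triDist
  positivity

lemma triWt_eq_expect {f : Submodule F (Fin n → F) → Submodule F (Fin n → F) → Γ}
    (hf : ∀ p ∈ linkTriangles F n i₀ i₁ i₂ s, f p.2.2 p.1 = (f p.1 p.2.2)⁻¹) :
    triWt F n i₀ i₁ i₂ s Γ f = 𝔼 p ∈ linkTriangles F n i₀ i₁ i₂ s, curvature f p := by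
  rw [expect_eq_sum_div_card, triWt]
  congr 1
  refine sum_congr rfl fun p hp => if_congr ?_ rfl rfl
  rw [hf p hp, mul_inv_eq_one, IsFlat]

end LinkTriangles

/-- Coboundary expansion (with constant `1/13`) of well-separated
three-dimension projections of links of the flags complex, with respect to any group. -/
theorem stmt_8 (d : ℕ) (hd : 3 ≤ d) (q : ℕ) (hq : IsPrimePow q)
    (F : Type) [Field F] [Fintype F] (hF : Fintype.card F = q)
    (Γ : Type) [Group Γ]
    (i₀ i₁ i₂ : ℕ) (h01 : i₀ < i₁) (h12 : i₁ < i₂) (hlow : 1 ≤ i₀) (hhigh : i₂ ≤ d - 1)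
    (s : Finset (Submodule F (Fin d → F)))
    (hchain : IsChain (· ≤ ·) (s : Set (Submodule F (Fin d → F))))
    (hdims : ∀ V ∈ s, 1 ≤ Module.finrank F V ∧ Module.finrank F V ≤ d - 1 ∧
      Module.finrank F V ≠ i₀ ∧ Module.finrank F V ≠ i₁ ∧ Module.finrank F V ≠ i₂)
    (hdistinct : ∀ V ∈ s, ∀ V' ∈ s, V ≠ V' →
      Module.finrank F V ≠ Module.finrank F V')
    (hcond1 : 2 * i₀ ≤ i₁ ∨
      ∃ V ∈ s, i₀ < Module.finrank F V ∧ Module.finrank F V < i₁)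
    (hcond2 : 2 * i₁ ≤ i₂ + i₀ ∨
      (∃ V ∈ s, i₀ < Module.finrank F V ∧ Module.finrank F V < i₁ ∧
        2 * i₁ ≤ i₂ + Module.finrank F V) ∨
      ∃ W ∈ s, i₁ < Module.finrank F W ∧ Module.finrank F W < i₂)
    (f : Submodule F (Fin d → F) → Submodule F (Fin d → F) → Γ)
    (hanti : ∀ U V : Submodule F (Fin d → F), U ≠ V →
      (Module.finrank F U = i₀ ∨ Module.finrank F U = i₁ ∨ Module.finrank F U = i₂) →
      (Module.finrank F V = i₀ ∨ Module.finrank F V = i₁ ∨ Module.finrank F V = i₂) →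
      IsChain (· ≤ ·)
        ((insert U (insert V s) : Finset (Submodule F (Fin d → F))) :
          Set (Submodule F (Fin d → F))) →
      f U V = (f V U)⁻¹) :
    ∃ g : Submodule F (Fin d → F) → Γ,
      (1 / 13 : ℝ) * triDist F d i₀ i₁ i₂ s Γ f g ≤ triWt F d i₀ i₁ i₂ s Γ f := by
  have hf_symm : ∀ p ∈ linkTriangles F d i₀ i₁ i₂ s, f p.2.2 p.1 = (f p.1 p.2.2)⁻¹ := by
    intro p hp
    obtain ⟨h₀, -, h₂, hp⟩ := (mem_filter.1 hp).2
    refine hanti p.2.2 p.1 (fun h => ?_) (Or.inr (Or.inr h₂)) (Or.inl h₀) (hp.mono ?_)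
    · exact (h01.trans h12).ne (by rw [← h₀, ← h₂, h])
    · grind
  obtain ⟨g, hg⟩ := stmt_8_general h01 h12 (by simpa using hhigh.trans (d.sub_le 1)) hchain
    hcond1 hcond2 (coe_linkTriangles h01.le h12.le hchain) f
  refine ⟨g, ?_⟩
  calc (1 / 13 : ℝ) * triDist F d i₀ i₁ i₂ s Γ f g ≤ 3 / 23 * triDist F d i₀ i₁ i₂ s Γ f g :=
        mul_le_mul_of_nonneg_right (by norm_num) (triDist_nonneg f g)
    _ ≤ triWt F d i₀ i₁ i₂ s Γ f := by
        rw [triDist_eq_expect, triWt_eq_expect hf_symm]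
        linarith
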